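/- Let λ₂ and λ_N be real numbers with -1 ≤ λ_N ≤ λ₂ < 1, and for a > -1 define c(a) = max(|λ₂ + a|, |λ_N + a|)/(1 + a). Then for every a > -1, c(a) ≥ (λ₂ - λ_N)/(2 - λ₂ - λ_N), and equality holds at a = -(λ₂ + λ_N)/2. In other words, the choice a = -(λ₂ + λ_N)/2 minimizes c over (-1, ∞), with minimum value (λ₂ - λ_N)/(2 - λ₂ - λ_N). -/

import Mathlib

/-- Optimal shifting: for `-1 ≤ λ_N ≤ λ₂ < 1`, the quantity
`c(a) = max(|λ₂ + a|, |λ_N + a|)/(1 + a)` over `a > -1` is minimized at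
`a = -(λ₂ + λ_N)/2`, with minimum value `(λ₂ - λ_N)/(2 - λ₂ - λ_N)`. -/
theorem optimal_shift_minimizes_c (lam₂ lamN : ℝ)
    (h₁ : -1 ≤ lamN) (h₂ : lamN ≤ lam₂) (h₃ : lam₂ < 1) :
    (∀ a : ℝ, -1 < a →
      (lam₂ - lamN) / (2 - lam₂ - lamN) ≤ max |lam₂ + a| |lamN + a| / (1 + a)) ∧
    max |lam₂ + (-(lam₂ + lamN) / 2)| |lamN + (-(lam₂ + lamN) / 2)| /
        (1 + (-(lam₂ + lamN) / 2)) =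
      (lam₂ - lamN) / (2 - lam₂ - lamN) := by
  have hpos : 0 < 2 - lam₂ - lamN := by linarith
  refine ⟨fun a ha => ?_, ?_⟩
  · rw [div_le_div_iff₀ hpos (by linarith)]
    have hl : lam₂ + a ≤ max |lam₂ + a| |lamN + a| := (le_abs_self _).trans (le_max_left _ _)
    have hr : -(lamN + a) ≤ max |lam₂ + a| |lamN + a| := (neg_le_abs _).trans (le_max_right _ _)
    have hl' := mul_le_mul_of_nonneg_right hl (by linarith : 0 ≤ 1 - lamN)
    have hr' := mul_le_mul_of_nonneg_right hr (by linarith : 0 ≤ 1 - lam₂)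
    linarith
  · have hl : lam₂ + (-(lam₂ + lamN) / 2) = (lam₂ - lamN) / 2 := by ring
    have hr : lamN + (-(lam₂ + lamN) / 2) = -((lam₂ - lamN) / 2) := by ring
    have hd : 1 + (-(lam₂ + lamN) / 2) = (2 - lam₂ - lamN) / 2 := by ring
    rw [hl, hr, hd, abs_neg, max_self, abs_of_nonneg (by linarith),
      div_div_div_cancel_right₀ two_ne_zero]
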